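/- Let 0 < γ < 1 and let ν be a nonzero σ-finite measure on 𝒮↓ with ∫(1−s₁)ν(ds) < ∞ and ν({(1,0,0,…)}) = 0. Let (pₙ)ₙ≥₁ be a sequence of probability measures on 𝒫ₙ with p₁((1)) = 1, and for n ≥ 2 define the probability qₙ on 𝒫ₙ by qₙ(λ) = p_{n−1}(λ') whenever λ ∈ 𝒫ₙ is obtained from some λ' ∈ 𝒫_{n−1} by appending one part equal to 1 and reordering decreasingly, and qₙ(λ) = 0 for partitions λ of n having no part equal to 1. Then (qₙ) satisfies Hypothesis (H) with parameters (γ,ν) if and only if (pₙ) does. -/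

import Mathlib

open MeasureTheory Filter Real Set

/-- The space `𝒮↓` of nonincreasing nonnegative sequences summing to `1`.
(On this set, the topology of the uniform distance `d(s,s') = supᵢ|sᵢ−s'ᵢ|` coincides with
the product (pointwise) topology inherited from `ℕ → ℝ`, since `sᵢ ≤ 1/(i+1)` uniformly.) -/
def Sdown : Set (ℕ → ℝ) :=
  {s | (∀ i, 0 ≤ s i) ∧ (∀ i j, i ≤ j → s j ≤ s i) ∧ HasSum s 1}

/-- The sequence `(1,0,0,…)`. -/
def oneSeq : ℕ → ℝ := fun i => if i = 0 then 1 else 0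

lemma oneSeq_mem_Sdown : oneSeq ∈ Sdown := by
  refine ⟨fun i => ?_, fun i j hij => ?_, ?_⟩
  · unfold oneSeq; split <;> norm_num
  · unfold oneSeq
    rcases Nat.eq_zero_or_pos j with hj | hj
    · have hi : i = 0 := by omega
      simp [hi, hj]
    · have hj' : j ≠ 0 := by omega
      simp only [hj', if_false]
      split <;> norm_num
  · exact hasSum_ite_eq 0 1

-- Interpret a sequence as an element of `𝒮↓` (junk value `(1,0,0,…)` if it is not in `𝒮↓`).
open Classical in
noncomputable def toSdown (s : ℕ → ℝ) : ↥Sdown :=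
  if h : s ∈ Sdown then ⟨s, h⟩ else ⟨oneSeq, oneSeq_mem_Sdown⟩

/-- `partVec n λ` is the element `λ/n = (λ₁/n, …, λ_p/n, 0, 0, …)` of `𝒮↓`: the parts of the
partition `λ` of `n`, in decreasing order, padded with zeros and divided by `n`. -/
noncomputable def partVec (n : ℕ) (lam : Nat.Partition n) : ℕ → ℝ :=
  fun i => (((lam.parts.sort (· ≤ ·)).reverse.getD i 0 : ℕ) : ℝ) / n

/-- Hypothesis (H) of Haas–Miermont for a sequence of splitting probabilities `(qₙ)`, with
parameters `γ > 0` and `ν` a nonzero σ-finite measure on `𝒮↓` with `∫(1−s₁)ν(ds) < ∞` and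
`ν({(1,0,…)}) = 0`: for every bounded continuous `f : 𝒮↓ → ℝ`,
`n^γ Σ_{λ∈𝒫ₙ} qₙ(λ)(1−λ₁/n) f(λ/n) → ∫_{𝒮↓} (1−s₁) f(s) ν(ds)`. -/
def HypH (q : ∀ n, Nat.Partition n → ℝ) (γ : ℝ) (ν : Measure ↥Sdown) : Prop :=
  ∀ f : ↥Sdown → ℝ, Continuous f → (∃ C, ∀ s, |f s| ≤ C) →
    Tendsto (fun n : ℕ => (n : ℝ) ^ γ * ∑ lam : Nat.Partition n,
        q n lam * (1 - partVec n lam 0) * f (toSdown (partVec n lam)))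
      atTop (nhds (∫ s, (1 - s.1 0) * f s ∂ν))

/-- Append a part equal to `1` to a partition of `n`, giving a partition of `n+1`. -/
def addOne {n : ℕ} (lam : Nat.Partition n) : Nat.Partition (n + 1) where
  parts := 1 ::ₘ lam.parts
  parts_pos := by
    intro i hi
    rcases Multiset.mem_cons.1 hi with h | h
    · omega
    · exact lam.parts_pos h
  parts_sum := by
    rw [Multiset.sum_cons, lam.parts_sum]
    omega

/-- Remove a part equal to `1` from a partition of `n+1`, giving a partition of `n`. -/
def eraseOne {n : ℕ} (mu : Nat.Partition (n + 1)) (h : 1 ∈ mu.parts) : Nat.Partition n where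
  parts := mu.parts.erase 1
  parts_pos := fun hi => mu.parts_pos (Multiset.mem_of_mem_erase hi)
  parts_sum := by
    have h1 : (1 ::ₘ mu.parts.erase 1).sum = mu.parts.sum := by
      rw [Multiset.cons_erase h]
    rw [Multiset.sum_cons, mu.parts_sum] at h1
    omega

/-!
Appending a part `1` to a partition `λ'` of `n` moves the point `λ'/n` of `𝒮↓` by at most
`1 / (n + 1)` in each coordinate. Both instances of Hypothesis (H) say that measures carried by
finitely many atoms converge weakly to `(1 - s₁) ν(ds)`. The atoms of one are uniformly close to
those of the other, which by a Slutsky argument does not affect weak convergence. The factors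
`1 - s₁` at corresponding atoms differ by at most `1 / (n + 1)`, so after multiplication by `n ^ γ`
the weights differ in total by at most `n ^ (γ - 1)` times the mass of `pₙ`, which tends to `0`
because `γ < 1`. Finally the normalisations `(n + 1) ^ γ` and `n ^ γ` are equivalent.

The Slutsky argument is immediate for uniformly continuous test functions; bounded continuous ones
are pointwise limits of Lipschitz functions from below and, by symmetry, from above.
-/

open scoped Topology Uniformity NNReal

section LipschitzEnvelope

variable {X : Type*} [PseudoMetricSpace X] {f : X → ℝ} {m : ℝ}

/-- The Pasch–Hausdorff envelope: the largest `K`-Lipschitz function below `f`, when `f` is bounded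
below (otherwise the infimum may take its junk value `0`). It is used to approximate `f` from below
by uniformly continuous functions. -/
noncomputable def lipschitzEnvelope (K : ℝ≥0) (f : X → ℝ) (x : X) : ℝ :=
  ⨅ y, (f y + K * dist x y)

lemma lipschitzEnvelope_le_add (hm : ∀ y, m ≤ f y) (K : ℝ≥0) (x y : X) :
    lipschitzEnvelope K f x ≤ f y + K * dist x y := by
  refine ciInf_le ⟨m, ?_⟩ y
  rintro _ ⟨z, rfl⟩
  exact (hm z).trans (le_add_of_nonneg_right (by positivity))

lemma lipschitzEnvelope_le (hm : ∀ y, m ≤ f y) (K : ℝ≥0) (x : X) :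
    lipschitzEnvelope K f x ≤ f x := by
  simpa using lipschitzEnvelope_le_add hm K x x

lemma le_lipschitzEnvelope (hm : ∀ y, m ≤ f y) (K : ℝ≥0) (x : X) :
    m ≤ lipschitzEnvelope K f x :=
  have : Nonempty X := ⟨x⟩
  le_ciInf fun y => (hm y).trans (le_add_of_nonneg_right (by positivity))

lemma lipschitzWith_lipschitzEnvelope (hm : ∀ y, m ≤ f y) (K : ℝ≥0) :
    LipschitzWith K (lipschitzEnvelope K f) := by
  refine LipschitzWith.of_le_add_mul _ fun x y => ?_
  have : Nonempty X := ⟨x⟩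
  rw [← sub_le_iff_le_add]
  refine le_ciInf fun z => ?_
  have triangle : (K : ℝ) * dist x z ≤ K * (dist x y + dist y z) := by
    gcongr
    exact dist_triangle x y z
  linarith [lipschitzEnvelope_le_add hm K x z]

lemma tendsto_lipschitzEnvelope (hm : ∀ y, m ≤ f y) {x : X} (hf : LowerSemicontinuousAt f x) :
    Tendsto (fun K : ℝ≥0 => lipschitzEnvelope K f x) atTop (𝓝 (f x)) := by
  have : Nonempty X := ⟨x⟩
  refine tendsto_order.2 ⟨fun b hb => ?_,
    fun b hb => .of_forall fun K => (lipschitzEnvelope_le hm K x).trans_lt hb⟩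
  obtain ⟨c, hbc, hcx⟩ := exists_between hb
  obtain ⟨δ, hδ, near⟩ := Metric.eventually_nhds_iff.1 (hf c hcx)
  have large : ∀ᶠ K : ℝ≥0 in atTop, (c - m) / δ ≤ K :=
    NNReal.tendsto_coe_atTop.2 tendsto_id |>.eventually_ge_atTop _
  filter_upwards [large] with K hK
  refine hbc.trans_le (le_ciInf fun y => ?_)
  rcases lt_or_ge (dist y x) δ with hy | hy
  · exact (near hy).le.trans (le_add_of_nonneg_right (by positivity))
  · calc c ≤ m + K * δ := by linarith [(div_le_iff₀ hδ).1 hK]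
      _ ≤ f y + K * dist x y := by
        rw [dist_comm x y]
        gcongr
        exact hm y

end LipschitzEnvelope

lemma exists_uniformContinuous_tendsto_of_lowerSemicontinuous {X : Type*} [UniformSpace X]
    [(𝓤 X).IsCountablyGenerated] {f : X → ℝ} {C : ℝ} (hf : LowerSemicontinuous f)
    (hC : ∀ x, |f x| ≤ C) :
    ∃ g : ℕ → X → ℝ, (∀ k, UniformContinuous (g k)) ∧ (∀ k x, g k x ≤ f x) ∧
      (∀ k x, |g k x| ≤ C) ∧ ∀ x, Tendsto (fun k => g k x) atTop (𝓝 (f x)) := by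
  let := UniformSpace.pseudoMetricSpace X
  have hm : ∀ x, -C ≤ f x := fun x => (abs_le.1 (hC x)).1
  refine ⟨fun k => lipschitzEnvelope k f,
    fun k => (lipschitzWith_lipschitzEnvelope hm k).uniformContinuous,
    fun k => lipschitzEnvelope_le hm k, fun k x => abs_le.2 ⟨le_lipschitzEnvelope hm k x, ?_⟩,
    fun x => (tendsto_lipschitzEnvelope hm (hf x)).comp tendsto_natCast_atTop_atTop⟩
  exact (lipschitzEnvelope_le hm k x).trans (abs_le.1 (hC x)).2

section AtomsTendsto

variable {α X : Type*} {l : Filter α} {ι : α → Type*} [∀ n, Fintype (ι n)]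
  {a b : ∀ n, ι n → ℝ} {x y : ∀ n, ι n → X}

-- Convergence along `comap Sigma.fst l` encodes uniformity in the index `i : ι n`.
lemma tendsto_sum_mul_sub_of_uniformContinuous [UniformSpace X] {A : ℝ}
    (ha : ∀ n i, 0 ≤ a n i) (hA : Tendsto (fun n => ∑ i, a n i) l (𝓝 A))
    (hxy : Tendsto (fun j : Σ n, ι n => (x j.1 j.2, y j.1 j.2)) (comap Sigma.fst l) (𝓤 X))
    {g : X → ℝ} (hg : UniformContinuous g) :
    Tendsto (fun n => ∑ i, a n i * (g (y n i) - g (x n i))) l (𝓝 0) := by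
  have dist_tendsto := tendsto_uniformity_iff_dist_tendsto_zero.1 (Tendsto.comp hg hxy)
  rw [Metric.tendsto_nhds]
  intro ε hε
  have close := dist_tendsto.eventually_lt_const (show 0 < ε / (|A| + 1) by positivity)
  filter_upwards [eventually_comap.1 close,
    hA.eventually_lt_const ((le_abs_self A).trans_lt (lt_add_one |A|))] with n hn hn_mass
  have term_le : ∀ i, |a n i * (g (y n i) - g (x n i))| ≤ a n i * (ε / (|A| + 1)) := fun i => by
    rw [abs_mul, abs_of_nonneg (ha n i), abs_sub_comm]
    exact mul_le_mul_of_nonneg_left (hn ⟨n, i⟩ rfl).le (ha n i)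
  calc dist (∑ i, a n i * (g (y n i) - g (x n i))) 0
      ≤ ∑ i, a n i * (ε / (|A| + 1)) := by
        rw [Real.dist_0_eq_abs]
        exact (Finset.abs_sum_le_sum_abs _ _).trans (Finset.sum_le_sum fun i _ => term_le i)
    _ = (∑ i, a n i) * (ε / (|A| + 1)) := (Finset.sum_mul _ _ _).symm
    _ < (|A| + 1) * (ε / (|A| + 1)) := by gcongr
    _ = ε := mul_div_cancel₀ _ (by positivity)

variable [MeasurableSpace X] {ν : Measure X} {w : X → ℝ}

/-- Weak convergence, along `l`, of the finite atomic measures `∑ i, a n i • δ_{x n i}` to the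
measure with density `w` with respect to `ν`, tested against bounded continuous functions. The
density is kept separate because `ν` itself may be infinite. -/
def AtomsTendsto [TopologicalSpace X] (l : Filter α) (a : ∀ n, ι n → ℝ) (x : ∀ n, ι n → X)
    (ν : Measure X) (w : X → ℝ) : Prop :=
  ∀ f : X → ℝ, Continuous f → (∃ C, ∀ s, |f s| ≤ C) →
    Tendsto (fun n => ∑ i, a n i * f (x n i)) l (𝓝 (∫ s, w s * f s ∂ν))

lemma AtomsTendsto.tendsto_sum_weights [TopologicalSpace X] (h : AtomsTendsto l a x ν w) :
    Tendsto (fun n => ∑ i, a n i) l (𝓝 (∫ s, w s ∂ν)) := by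
  simpa using h (fun _ => 1) continuous_const ⟨1, by simp⟩

lemma atomsTendsto_mul_left_iff [TopologicalSpace X] {r : α → ℝ} (hr : Tendsto r l (𝓝 1)) :
    AtomsTendsto l (fun n i => r n * a n i) x ν w ↔ AtomsTendsto l a x ν w := by
  refine forall₃_congr fun f _ _ => ?_
  simp only [mul_assoc, ← Finset.mul_sum]
  refine ⟨fun h => ?_, fun h => by simpa only [one_mul] using hr.mul h⟩
  have quotient := h.div hr one_ne_zero
  rw [div_one] at quotient
  refine quotient.congr' ?_
  filter_upwards [hr.eventually_ne one_ne_zero] with n hn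
  exact mul_div_cancel_left₀ _ hn

lemma atomsTendsto_congr_weights [TopologicalSpace X]
    (hab : Tendsto (fun n => ∑ i, |a n i - b n i|) l (𝓝 0)) :
    AtomsTendsto l a x ν w ↔ AtomsTendsto l b x ν w := by
  refine forall₂_congr fun f _ => forall_congr' fun ⟨C, hC⟩ => ?_
  have bound := hab.mul_const C
  rw [zero_mul] at bound
  refine tendsto_iff_of_dist (squeeze_zero (fun _ => dist_nonneg) (fun n => ?_) bound)
  rw [Real.dist_eq, ← Finset.sum_sub_distrib, Finset.sum_mul]
  refine (Finset.abs_sum_le_sum_abs _ _).trans (Finset.sum_le_sum fun i _ => ?_)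
  rw [← sub_mul, abs_mul]
  gcongr
  exact hC _

variable [UniformSpace X] [(𝓤 X).IsCountablyGenerated] [OpensMeasurableSpace X]

lemma eventually_lt_sum_of_lowerSemicontinuous (hw : Integrable w ν) (ha : ∀ n i, 0 ≤ a n i)
    (H : ∀ g : X → ℝ, UniformContinuous g → (∃ C, ∀ s, |g s| ≤ C) →
      Tendsto (fun n => ∑ i, a n i * g (x n i)) l (𝓝 (∫ s, w s * g s ∂ν)))
    {f : X → ℝ} (hf : LowerSemicontinuous f) {C : ℝ} (hC : ∀ s, |f s| ≤ C) {c : ℝ}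
    (hc : c < ∫ s, w s * f s ∂ν) : ∀ᶠ n in l, c < ∑ i, a n i * f (x n i) := by
  obtain ⟨g, g_uc, g_le, g_bdd, g_tendsto⟩ :=
    exists_uniformContinuous_tendsto_of_lowerSemicontinuous hf hC
  have integral_tendsto :
      Tendsto (fun k => ∫ s, w s * g k s ∂ν) atTop (𝓝 (∫ s, w s * f s ∂ν)) := by
    refine tendsto_integral_of_dominated_convergence (fun s => ‖w s‖ * C) (fun k => ?_)
      (hw.norm.mul_const C) (fun k => .of_forall fun s => ?_)
      (.of_forall fun s => (g_tendsto s).const_mul _)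
    · exact hw.aestronglyMeasurable.mul (g_uc k).continuous.measurable.aestronglyMeasurable
    · rw [norm_mul]
      gcongr
      exact g_bdd k s
  obtain ⟨k, hk⟩ := (integral_tendsto.eventually_const_lt hc).exists
  filter_upwards [(H (g k) (g_uc k) ⟨C, g_bdd k⟩).eventually_const_lt hk] with n hn
  refine hn.trans_le (Finset.sum_le_sum fun i _ => ?_)
  exact mul_le_mul_of_nonneg_left (g_le k _) (ha n i)

lemma AtomsTendsto.of_uniformContinuous (hw : Integrable w ν) (ha : ∀ n i, 0 ≤ a n i)
    (H : ∀ g : X → ℝ, UniformContinuous g → (∃ C, ∀ s, |g s| ≤ C) →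
      Tendsto (fun n => ∑ i, a n i * g (x n i)) l (𝓝 (∫ s, w s * g s ∂ν))) :
    AtomsTendsto l a x ν w := by
  rintro f hf ⟨C, hC⟩
  refine tendsto_order.2 ⟨fun c hc =>
    eventually_lt_sum_of_lowerSemicontinuous hw ha H hf.lowerSemicontinuous hC hc,
    fun c hc => ?_⟩
  have neg_lt : -c < ∫ s, w s * -f s ∂ν := by
    simpa only [mul_neg, integral_neg, neg_lt_neg_iff] using hc
  have below := eventually_lt_sum_of_lowerSemicontinuous hw ha H hf.neg.lowerSemicontinuous
    (fun s => (abs_neg (f s)).trans_le (hC s)) neg_lt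
  simpa only [Pi.neg_apply, mul_neg, Finset.sum_neg_distrib, neg_lt_neg_iff] using below

lemma AtomsTendsto.congr_points (hw : Integrable w ν) (ha : ∀ n i, 0 ≤ a n i)
    (hxy : Tendsto (fun j : Σ n, ι n => (x j.1 j.2, y j.1 j.2)) (comap Sigma.fst l) (𝓤 X))
    (h : AtomsTendsto l a x ν w) : AtomsTendsto l a y ν w := by
  refine .of_uniformContinuous hw ha fun g hg hC => ?_
  have sum := (h g hg.continuous hC).add
    (tendsto_sum_mul_sub_of_uniformContinuous ha h.tendsto_sum_weights hxy hg)
  rw [add_zero] at sum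
  refine sum.congr fun n => ?_
  rw [← Finset.sum_add_distrib]
  exact Finset.sum_congr rfl fun i _ => by ring

lemma atomsTendsto_congr_points (hw : Integrable w ν) (ha : ∀ n i, 0 ≤ a n i)
    (hxy : Tendsto (fun j : Σ n, ι n => (x j.1 j.2, y j.1 j.2)) (comap Sigma.fst l) (𝓤 X)) :
    AtomsTendsto l a x ν w ↔ AtomsTendsto l a y ν w :=
  ⟨.congr_points hw ha hxy, .congr_points hw ha (tendsto_swap_uniformity.comp hxy)⟩

end AtomsTendsto

section Partitions

variable {n : ℕ}

lemma eraseOne_addOne (lam : Nat.Partition n) (h : 1 ∈ (addOne lam).parts) :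
    eraseOne (addOne lam) h = lam :=
  Nat.Partition.ext (Multiset.erase_cons_head 1 lam.parts)

lemma addOne_eraseOne (mu : Nat.Partition (n + 1)) (h : 1 ∈ mu.parts) :
    addOne (eraseOne mu h) = mu :=
  Nat.Partition.ext (Multiset.cons_erase h)

lemma one_mem_parts_addOne (lam : Nat.Partition n) : 1 ∈ (addOne lam).parts :=
  Multiset.mem_cons_self 1 lam.parts

lemma addOne_injective : Function.Injective (addOne (n := n)) := fun _ _ h =>
  Nat.Partition.ext (Multiset.cons_inj_right 1 |>.1 (congrArg Nat.Partition.parts h))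

lemma sum_dite_eraseOne_mul {R : Type*} [NonUnitalNonAssocSemiring R]
    (c : Nat.Partition n → R) (g : Nat.Partition (n + 1) → R) :
    ∑ mu, (if h : 1 ∈ mu.parts then c (eraseOne mu h) else 0) * g mu =
      ∑ lam, c lam * g (addOne lam) := by
  refine (Fintype.sum_of_injective addOne addOne_injective _ _ (fun mu hmu => ?_)
    fun lam => ?_).symm
  · rw [dif_neg fun h => hmu ⟨eraseOne mu h, addOne_eraseOne mu h⟩, zero_mul]
  · rw [dif_pos (one_mem_parts_addOne lam), eraseOne_addOne]

lemma sort_parts_addOne_reverse (lam : Nat.Partition n) :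
    ((addOne lam).parts.sort (· ≤ ·)).reverse = (lam.parts.sort (· ≤ ·)).reverse ++ [1] := by
  have sort_cons : (addOne lam).parts.sort (· ≤ ·) = 1 :: lam.parts.sort (· ≤ ·) :=
    Multiset.sort_cons _ _ _ fun _ hb => lam.parts_pos hb
  rw [sort_cons, List.reverse_cons]

lemma getD_reverse_sort_parts_le (lam : Nat.Partition n) (i : ℕ) :
    (lam.parts.sort (· ≤ ·)).reverse.getD i 0 ≤ n := by
  rcases lt_or_ge i (lam.parts.sort (· ≤ ·)).reverse.length with h | h
  · rw [List.getD_eq_getElem _ _ h]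
    refine Nat.Partition.le_of_mem_parts (p := lam) ?_
    simpa only [List.mem_reverse, Multiset.mem_sort] using List.getElem_mem h
  · rw [List.getD_eq_default _ _ h]
    exact n.zero_le

lemma partVec_le_one (lam : Nat.Partition n) (i : ℕ) : partVec n lam i ≤ 1 :=
  div_le_one_of_le₀ (mod_cast getD_reverse_sort_parts_le lam i) n.cast_nonneg

lemma antitone_getD_zero {L : List ℕ} (hL : L.Pairwise (· ≥ ·)) :
    Antitone fun i => L.getD i 0 := by
  intro i j hij
  rcases lt_or_ge j L.length with hj | hj
  · simp only [List.getD_eq_getElem, hj, hij.trans_lt hj]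
    exact hL.rel_get_of_le (a := ⟨i, hij.trans_lt hj⟩) (b := ⟨j, hj⟩) hij
  · simp only [List.getD_eq_default, hj]
    exact Nat.zero_le _

lemma hasSum_getD_zero {M : Type*} [AddCommMonoid M] [TopologicalSpace M] (L : List M) :
    HasSum (fun i => L.getD i 0) L.sum := by
  have sum_eq : ∑ i ∈ Finset.range L.length, L.getD i 0 = L.sum := by
    simp [Finset.sum_range]
  rw [← sum_eq]
  refine hasSum_sum_of_ne_finset_zero fun i hi => List.getD_eq_default _ _ ?_
  simpa using hi

lemma partVec_mem_Sdown (hn : n ≠ 0) (lam : Nat.Partition n) : partVec n lam ∈ Sdown := by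
  refine ⟨fun i => by unfold partVec; positivity, fun i j hij => ?_, ?_⟩
  · have sorted : (lam.parts.sort (· ≤ ·)).reverse.Pairwise (· ≥ ·) :=
      List.pairwise_reverse.2 (lam.parts.pairwise_sort _)
    exact div_le_div_of_nonneg_right (mod_cast antitone_getD_zero sorted hij) n.cast_nonneg
  · have sum_eq : (lam.parts.sort (· ≤ ·)).reverse.sum = n := by
      rw [List.sum_reverse, ← Multiset.sum_coe, Multiset.sort_eq, lam.parts_sum]
    have parts_hasSum := ((hasSum_getD_zero (lam.parts.sort (· ≤ ·)).reverse).map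
      (Nat.castAddMonoidHom ℝ) continuous_of_discreteTopology).div_const (n : ℝ)
    rw [sum_eq, Nat.coe_castAddMonoidHom, div_self (Nat.cast_ne_zero.2 hn)] at parts_hasSum
    exact parts_hasSum

lemma coe_toSdown_partVec (hn : n ≠ 0) (lam : Nat.Partition n) :
    (toSdown (partVec n lam) : ℕ → ℝ) = partVec n lam := by
  rw [toSdown, dif_pos (partVec_mem_Sdown hn lam)]

lemma getD_append_singleton_one_mem_Icc (L : List ℕ) (i : ℕ) :
    (L ++ [1]).getD i 0 ∈ Icc (L.getD i 0) (L.getD i 0 + 1) := by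
  rcases lt_trichotomy i L.length with h | h | h
  · rw [List.getD_append _ _ _ _ h]
    exact ⟨le_rfl, Nat.le_succ _⟩
  · simp [h]
  · simp [h.le, h]

lemma natCast_div_mem_Icc_div_add_one {c : ℕ} (hc : c ≤ n) :
    (c / n : ℝ) ∈ Icc (c / (n + 1) : ℝ) ((c + 1) / (n + 1)) := by
  rcases n.eq_zero_or_pos with rfl | hn
  · simp [Nat.le_zero.1 hc]
  · have c_le : (c : ℝ) ≤ n := Nat.cast_le.2 hc
    refine ⟨by gcongr; exact (lt_add_one _).le, ?_⟩
    rw [div_le_div_iff₀ (by positivity) (by positivity)]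
    linarith

lemma dist_partVec_addOne_le (lam : Nat.Partition n) (i : ℕ) :
    dist (partVec n lam i) (partVec (n + 1) (addOne lam) i) ≤ 1 / ((n : ℝ) + 1) := by
  set L := (lam.parts.sort (· ≤ ·)).reverse
  obtain ⟨le_append, append_le⟩ := getD_append_singleton_one_mem_Icc L i
  have old_mem := natCast_div_mem_Icc_div_add_one (getD_reverse_sort_parts_le lam i)
  have new_mem : partVec (n + 1) (addOne lam) i ∈
      Icc (L.getD i 0 / (n + 1) : ℝ) ((L.getD i 0 + 1) / (n + 1)) := by
    rw [partVec, sort_parts_addOne_reverse, Nat.cast_add_one]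
    exact ⟨by gcongr, by gcongr; exact_mod_cast append_le⟩
  refine (Real.dist_le_of_mem_Icc old_mem new_mem).trans_eq ?_
  rw [← sub_div, add_sub_cancel_left]

end Partitions

lemma tendsto_uniformity_Sdown_iff {β : Type*} {l : Filter β} {u v : β → Sdown} :
    Tendsto (fun j => (u j, v j)) l (𝓤 Sdown) ↔
      ∀ i, Tendsto (fun j => dist ((u j).1 i) ((v j).1 i)) l (𝓝 0) := by
  simp only [uniformity_setCoe, Pi.uniformity, comap_iInf, tendsto_iInf, comap_comap,
    tendsto_comap_iff, tendsto_uniformity_iff_dist_tendsto_zero, Function.comp_def, Prod.map_apply]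

lemma tendsto_uniformity_toSdown_partVec_addOne :
    Tendsto (fun j : Σ n, Nat.Partition n => (toSdown (partVec (j.1 + 1) (addOne j.2)),
      toSdown (partVec j.1 j.2))) (comap Sigma.fst atTop) (𝓤 Sdown) := by
  have bound_tendsto : Tendsto (fun j : Σ n, Nat.Partition n => 1 / ((j.1 : ℝ) + 1))
      (comap Sigma.fst atTop) (𝓝 0) :=
    tendsto_one_div_add_atTop_nhds_zero_nat.comp tendsto_comap
  refine tendsto_uniformity_Sdown_iff.2 fun i =>
    squeeze_zero' (.of_forall fun _ => dist_nonneg) ?_ bound_tendsto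
  filter_upwards [tendsto_comap.eventually (eventually_ne_atTop 0)] with j hj
  rw [coe_toSdown_partVec hj, coe_toSdown_partVec j.1.succ_ne_zero, dist_comm]
  exact dist_partVec_addOne_le j.2 i

lemma tendsto_add_one_div_self_rpow (γ : ℝ) :
    Tendsto (fun n : ℕ => (((n : ℝ) + 1) / n) ^ γ) atTop (𝓝 1) := by
  have ratio : Tendsto (fun n : ℕ => ((n : ℝ) + 1) / n) atTop (𝓝 1) := by
    simpa using (tendsto_natCast_div_add_atTop (1 : ℝ)).inv₀ one_ne_zero
  simpa using ratio.rpow_const (p := γ) (.inl one_ne_zero)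

lemma tendsto_natCast_rpow_sub_one_mul {γ : ℝ} (hγ : γ < 1) {M : ℕ → ℝ}
    (hM : M =ᶠ[atTop] 1) : Tendsto (fun n : ℕ => (n : ℝ) ^ (γ - 1) * M n) atTop (𝓝 0) := by
  have rpow_tendsto : Tendsto (fun n : ℕ => (n : ℝ) ^ (γ - 1)) atTop (𝓝 0) := by
    simpa only [neg_sub] using! (tendsto_rpow_neg_atTop (sub_pos.2 hγ)).comp
      tendsto_natCast_atTop_atTop
  refine rpow_tendsto.congr' ?_
  filter_upwards [hM] with n hn
  rw [hn, Pi.one_apply, mul_one]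

lemma hypH_iff_atomsTendsto (p : ∀ n, Nat.Partition n → ℝ) (γ : ℝ) (ν : Measure Sdown) :
    HypH p γ ν ↔ AtomsTendsto atTop
      (fun (n : ℕ) (lam : Nat.Partition n) => (n : ℝ) ^ γ * (p n lam * (1 - partVec n lam 0)))
      (fun n lam => toSdown (partVec n lam)) ν (fun s => 1 - s.1 0) := by
  simp only [HypH, AtomsTendsto, Finset.mul_sum, mul_assoc]

lemma hypH_iff_atomsTendsto_addOne {p q : ∀ n, Nat.Partition n → ℝ} (γ : ℝ) (ν : Measure Sdown)
    (hq : ∀ n, 1 ≤ n → ∀ mu : Nat.Partition (n + 1),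
      q (n + 1) mu = if h : 1 ∈ mu.parts then p n (eraseOne mu h) else 0) :
    HypH q γ ν ↔ AtomsTendsto atTop
      (fun (n : ℕ) (lam : Nat.Partition n) =>
        (n : ℝ) ^ γ * (p n lam * (1 - partVec (n + 1) (addOne lam) 0)))
      (fun n lam => toSdown (partVec (n + 1) (addOne lam))) ν (fun s => 1 - s.1 0) := by
  rw [← atomsTendsto_mul_left_iff (tendsto_add_one_div_self_rpow γ)]
  refine forall₃_congr fun f _ _ => ?_
  rw [← tendsto_add_atTop_iff_nat 1]
  refine tendsto_congr' ?_
  filter_upwards [eventually_ge_atTop 1] with n hn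
  have rescale : (((n : ℝ) + 1) / n) ^ γ * (n : ℝ) ^ γ = ((n + 1 : ℕ) : ℝ) ^ γ := by
    rw [← Real.mul_rpow (by positivity) (by positivity), div_mul_cancel₀ _ (by positivity),
      Nat.cast_add_one]
  simp only [← mul_assoc, rescale]
  simp only [hq n hn, mul_assoc, ← Finset.mul_sum]
  rw [sum_dite_eraseOne_mul (p n) fun mu =>
    (1 - partVec (n + 1) mu 0) * f (toSdown (partVec (n + 1) mu))]

lemma tendsto_sum_abs_weight_sub {p : ∀ n, Nat.Partition n → ℝ} {γ : ℝ}
    (hp0 : ∀ n lam, 0 ≤ p n lam)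
    (hmass : Tendsto (fun n : ℕ => (n : ℝ) ^ (γ - 1) * ∑ lam, p n lam) atTop (𝓝 0)) :
    Tendsto (fun n : ℕ => ∑ lam : Nat.Partition n,
      |(n : ℝ) ^ γ * (p n lam * (1 - partVec (n + 1) (addOne lam) 0)) -
        (n : ℝ) ^ γ * (p n lam * (1 - partVec n lam 0))|) atTop (𝓝 0) := by
  refine squeeze_zero' (.of_forall fun n => Finset.sum_nonneg fun _ _ => abs_nonneg _) ?_ hmass
  filter_upwards [eventually_gt_atTop 0] with n hn
  rw [Finset.mul_sum]
  refine Finset.sum_le_sum fun lam _ => ?_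
  have n_pos : (0 : ℝ) < n := Nat.cast_pos.2 hn
  calc |(n : ℝ) ^ γ * (p n lam * (1 - partVec (n + 1) (addOne lam) 0)) -
        (n : ℝ) ^ γ * (p n lam * (1 - partVec n lam 0))|
      = (n : ℝ) ^ γ * p n lam * dist (partVec n lam 0) (partVec (n + 1) (addOne lam) 0) := by
        rw [Real.dist_eq, ← abs_of_nonneg (mul_nonneg (by positivity) (hp0 n lam)), ← abs_mul]
        ring_nf
    _ ≤ (n : ℝ) ^ γ * p n lam * (1 / n) := by
        refine mul_le_mul_of_nonneg_left ?_ (mul_nonneg (by positivity) (hp0 n lam))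
        refine (dist_partVec_addOne_le lam 0).trans ?_
        gcongr
        exact (lt_add_one _).le
    _ = (n : ℝ) ^ (γ - 1) * p n lam := by
        rw [Real.rpow_sub_one n_pos.ne']
        ring

theorem stmt8_general (γ : ℝ) (ν : Measure Sdown)
    (hνint : Integrable (fun s : Sdown => 1 - s.1 0) ν)
    (p : ∀ n, Nat.Partition n → ℝ) (hp0 : ∀ n lam, 0 ≤ p n lam)
    (hmass : Tendsto (fun n : ℕ => (n : ℝ) ^ (γ - 1) * ∑ lam, p n lam) atTop (𝓝 0))
    (q : ∀ n, Nat.Partition n → ℝ)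
    (hq : ∀ n, 1 ≤ n → ∀ mu : Nat.Partition (n + 1),
      q (n + 1) mu = if h : 1 ∈ mu.parts then p n (eraseOne mu h) else 0) :
    HypH q γ ν ↔ HypH p γ ν := by
  have weight_nonneg : ∀ n (lam : Nat.Partition n),
      0 ≤ (n : ℝ) ^ γ * (p n lam * (1 - partVec n lam 0)) := fun n lam =>
    mul_nonneg (by positivity) (mul_nonneg (hp0 n lam) (sub_nonneg.2 (partVec_le_one lam 0)))
  rw [hypH_iff_atomsTendsto_addOne γ ν hq,
    atomsTendsto_congr_weights (tendsto_sum_abs_weight_sub hp0 hmass),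
    atomsTendsto_congr_points (y := fun n lam => toSdown (partVec n lam)) hνint
      weight_nonneg tendsto_uniformity_toSdown_partVec_addOne,
    ← hypH_iff_atomsTendsto]

/-- let `0 < γ < 1`, `ν` a nonzero σ-finite measure on `𝒮↓` with
`∫(1−s₁)ν(ds) < ∞` and `ν({(1,0,…)}) = 0`; let `(pₙ)` be splitting probabilities with
`p₁((1)) = 1`, and let `qₙ` be obtained from `p_{n−1}` by appending a part `1`
(`qₙ(λ) = p_{n−1}(λ')` if `λ = (λ',1)`, and `qₙ(λ) = 0` if `λ` has no part equal to `1`).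
Then `(qₙ)` satisfies Hypothesis (H) with parameters `(γ,ν)` iff `(pₙ)` does. -/
theorem stmt8 (γ : ℝ) (hγ0 : 0 < γ) (hγ1 : γ < 1)
    (ν : Measure ↥Sdown) [SigmaFinite ν] (hν0 : ν ≠ 0)
    (hνint : Integrable (fun s : ↥Sdown => 1 - s.1 0) ν)
    (hνone : ν {⟨oneSeq, oneSeq_mem_Sdown⟩} = 0)
    (p : ∀ n, Nat.Partition n → ℝ)
    (hp0 : ∀ n lam, 0 ≤ p n lam)
    (hp1 : ∀ n, 1 ≤ n → ∑ lam : Nat.Partition n, p n lam = 1)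
    (hp11 : p 1 (Nat.Partition.indiscrete 1) = 1)
    (q : ∀ n, Nat.Partition n → ℝ)
    (hq : ∀ n, 1 ≤ n → ∀ mu : Nat.Partition (n + 1),
      q (n + 1) mu = if h : 1 ∈ mu.parts then p n (eraseOne mu h) else 0) :
    HypH q γ ν ↔ HypH p γ ν :=
  stmt8_general γ ν hνint p hp0
    (tendsto_natCast_rpow_sub_one_mul hγ1 (eventually_atTop.2 ⟨1, hp1⟩)) q hq
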